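/- Let $s\ge 2$ and $d\ge 1$ be integers and let $f$ be a homogeneous polynomial of degree $s$ in $d$ variables with rational coefficients such that the set $\{x\in\mathbb{Q}^d : f(x)=0\}$ is finite. Let $|\cdot|$ denote the Euclidean norm on $\mathbb{R}^d$, let $D$ be the least common denominator of the coefficients of $f$, and let $K=\sup\{|f(x)| : x\in\mathbb{R}^d,\ |x|=1\}$. Let $\xi\in\mathbb{R}^d\setminus\mathbb{Q}^d$ satisfy $f(\xi)=1$, and for real $T$ put $$\Psi_{f,\xi}(T)=\min\left\{\frac{|q\xi-a|^s}{q} \;:\; q\in\mathbb{Z},\ a=(a_1,\dots,a_d)\in\mathbb{Z}^d,\ 1\le q\le T,\ f\left(\frac{a_1}{q},\dots,\frac{a_d}{q}\right)=1\right\},$$ where the minimum over the empty set is $+\infty$. Then for every $\varepsilon>0$ there exist arbitrarily large real $T$ such that $$T^{s-1}\cdot\Psi_{f,\xi}(T)\ \ge\ \frac{1}{2^sDK}-\varepsilon .$$ -/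

import Mathlib

/-- `D(f)`: the least common denominator of the coefficients of `f`. -/
def coeffDenom {d : ℕ} (f : MvPolynomial (Fin d) ℚ) : ℕ :=
  f.support.lcm fun m => (f.coeff m).den

/-- `K(f)`: the supremum of `|f(x)|` over the Euclidean unit sphere of `ℝ^d`. -/
noncomputable def sphereSup {d : ℕ} (f : MvPolynomial (Fin d) ℚ) : ℝ :=
  sSup ((fun x : EuclideanSpace ℝ (Fin d) => |MvPolynomial.aeval (fun i => x i) f|) ''
    Metric.sphere 0 1)

/-- `Ψ_{f,ξ}(T)`: the minimum of `|qξ - a|^s / q` over the integer vectors `(q, a₁, …, a_d)`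
with `1 ≤ q ≤ T` and `f(a₁/q, …, a_d/q) = 1`, where `|·|` is the Euclidean norm and `s` is the
degree of `f`. It takes values in the extended reals, because there may be no such vector, in which
case the minimum is `+∞`. -/
noncomputable def PsiSurface {d : ℕ} (f : MvPolynomial (Fin d) ℚ) (s : ℕ)
    (ξ : EuclideanSpace ℝ (Fin d)) (T : ℝ) : EReal :=
  sInf {v : EReal | ∃ (q : ℤ) (a : Fin d → ℤ),
    1 ≤ q ∧ (q : ℝ) ≤ T ∧
    MvPolynomial.eval (fun i => (a i : ℚ) / (q : ℚ)) f = 1 ∧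
    v = ((‖(q : ℝ) • ξ - WithLp.toLp 2 (fun i => (a i : ℝ))‖ ^ s / (q : ℝ) : ℝ) : EReal)}

open MvPolynomial

/-- A homogeneous polynomial of degree `s` scales by `t ^ s` under dilation by `t`. -/
theorem MvPolynomial.aeval_mul_left_of_isHomogeneous {σ R S : Type*} [CommSemiring R] [CommSemiring S]
    [Algebra R S] {f : MvPolynomial σ R} {s : ℕ} (hf : f.IsHomogeneous s) (t : S) (x : σ → S) :
    aeval (fun i => t * x i) f = t ^ s * aeval x f := by
  simp only [aeval_def, eval₂_eq, Finset.mul_sum]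
  refine Finset.sum_congr rfl fun m hm => ?_
  have hdeg : ∑ i ∈ m.support, m i = s := by
    rw [← hf (mem_support_iff.mp hm), Finsupp.weight_apply]
    simp [Finsupp.sum]
  simp only [mul_pow, Finset.prod_mul_distrib, Finset.prod_pow_eq_pow_sum, hdeg]
  ring

/-- The mixed second difference of a polynomial along the directions `α • a` and `β • b` is
divisible by `α * β`. -/
theorem MvPolynomial.mul_dvd_eval_mixed_difference {σ R : Type*} [CommRing R]
    (g : MvPolynomial σ R) (α β : R) (a b : σ → R) :
    α * β ∣ eval (fun i => α * a i + β * b i) g - eval (fun i => α * a i) g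
      - eval (fun i => β * b i) g + eval (fun _ => 0) g := by
  suffices h : (α ∣ eval (fun i => α * a i) g - eval (fun _ => 0) g) ∧
      (β ∣ eval (fun i => β * b i) g - eval (fun _ => 0) g) ∧
      α * β ∣ eval (fun i => α * a i + β * b i) g - eval (fun i => α * a i) g
        - eval (fun i => β * b i) g + eval (fun _ => 0) g from h.2.2
  induction g using MvPolynomial.induction_on with
  | C r => simp
  | add p q hp hq =>
    obtain ⟨⟨u, hu⟩, ⟨v, hv⟩, ⟨w, hw⟩⟩ := hp
    obtain ⟨⟨u', hu'⟩, ⟨v', hv'⟩, ⟨w', hw'⟩⟩ := hq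
    simp only [map_add]
    exact ⟨⟨u + u', by linear_combination hu + hu'⟩, ⟨v + v', by linear_combination hv + hv'⟩,
      ⟨w + w', by linear_combination hw + hw'⟩⟩
  | mul_X p i hp =>
    obtain ⟨⟨u, hu⟩, ⟨v, hv⟩, ⟨w, hw⟩⟩ := hp
    simp only [map_mul, eval_X, mul_zero, sub_zero, add_zero]
    refine ⟨⟨_, by rw [mul_left_comm]⟩, ⟨_, by rw [mul_left_comm]⟩,
      ⟨a i * (v + α * w) + b i * (u + β * w), ?_⟩⟩
    linear_combination (α * a i + β * b i) * hw + α * a i * hv + β * b i * hu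

/-- Clearing the denominators of `f` gives an integral polynomial. -/
theorem exists_int_map_eq_coeffDenom_smul {d : ℕ} (f : MvPolynomial (Fin d) ℚ) :
    ∃ g : MvPolynomial (Fin d) ℤ, map (Int.castRingHom ℚ) g = (coeffDenom f : ℚ) • f := by
  rw [← Set.mem_range, mem_range_map_iff_coeffs_subset]
  intro c hc
  obtain ⟨m, hm, rfl⟩ := mem_coeffs_iff.mp (Finset.mem_coe.mp hc)
  have hm' : m ∈ f.support := support_smul hm
  obtain ⟨k, hk⟩ : (f.coeff m).den ∣ coeffDenom f := Finset.dvd_lcm hm'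
  refine ⟨k * (f.coeff m).num, ?_⟩
  rw [coeff_smul, hk, smul_eq_mul, eq_intCast]
  push_cast
  rw [mul_comm ((f.coeff m).den : ℚ), mul_assoc, Rat.den_mul_eq_num]

theorem coeffDenom_pos {d : ℕ} (f : MvPolynomial (Fin d) ℚ) : 0 < coeffDenom f := by
  refine Nat.pos_of_ne_zero fun h => ?_
  obtain ⟨m, -, hm⟩ := Finset.lcm_eq_zero_iff.mp h
  exact (f.coeff m).den_nz hm

theorem abs_aeval_le_sphereSup_mul {d s : ℕ} {f : MvPolynomial (Fin d) ℚ} (hs : s ≠ 0)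
    (hf : f.IsHomogeneous s) (x : EuclideanSpace ℝ (Fin d)) :
    |aeval (fun i => x i) f| ≤ sphereSup f * ‖x‖ ^ s := by
  have hcont : Continuous fun x : EuclideanSpace ℝ (Fin d) => |aeval (fun i => x i) f| := by
    simp only [aeval_def, eval₂_eq]
    fun_prop
  have hbdd := ((isCompact_sphere (0 : EuclideanSpace ℝ (Fin d)) 1).image hcont).bddAbove
  rcases eq_or_ne x 0 with rfl | hx
  · have := aeval_mul_left_of_isHomogeneous hf (0 : ℝ) (fun _ => 0)
    simp [hs] at this
    simp [this, hs]
  · have hn : 0 < ‖x‖ := norm_pos_iff.mpr hx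
    have hle : |aeval (fun i => (‖x‖⁻¹ • x) i) f| ≤ sphereSup f :=
      le_csSup hbdd ⟨‖x‖⁻¹ • x, by simp [norm_smul, hn.ne'], rfl⟩
    have hsc := aeval_mul_left_of_isHomogeneous hf ‖x‖ (fun i => (‖x‖⁻¹ • x) i)
    have hxx : (fun i => ‖x‖ * (‖x‖⁻¹ • x) i) = fun i => x i := by
      ext i
      simp [hn.ne']
    rw [hxx] at hsc
    rw [hsc, abs_mul, abs_of_pos (pow_pos hn s), mul_comm]
    gcongr

theorem eval_ne_zero_of_finite_zeros {d s : ℕ} {f : MvPolynomial (Fin d) ℚ}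
    (hf : f.IsHomogeneous s) (hfin : {x : Fin d → ℚ | eval x f = 0}.Finite)
    {x : Fin d → ℚ} (hx : x ≠ 0) : eval x f ≠ 0 := by
  intro h0
  obtain ⟨i, hi⟩ := Function.ne_iff.mp hx
  have hinj : Function.Injective fun (t : ℚ) (j : Fin d) => t * x j := fun t t' h =>
    mul_right_cancel₀ hi (congrFun h i)
  refine Set.infinite_range_of_injective hinj (hfin.subset ?_)
  rintro _ ⟨t, rfl⟩
  have := aeval_mul_left_of_isHomogeneous hf t x
  simp only [aeval_eq_eval] at this
  simp [this, h0]

/-- The numerators of two distinct rational points of `f = 1` satisfy a strong separation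
property, since `D(f) f(q'a - qa')` is a nonzero multiple of `qq'`. -/
theorem mul_le_coeffDenom_mul_sphereSup_mul {d s : ℕ} {f : MvPolynomial (Fin d) ℚ} (hs : s ≠ 0)
    (hf : f.IsHomogeneous s) (hfin : {x : Fin d → ℚ | eval x f = 0}.Finite)
    {q q' : ℤ} {a a' : Fin d → ℤ} (hq : 1 ≤ q) (hq' : 1 ≤ q')
    (h : eval (fun i => (a i : ℚ) / (q : ℚ)) f = 1)
    (h' : eval (fun i => (a' i : ℚ) / (q' : ℚ)) f = 1)
    (hne : ∃ i, q' * a i - q * a' i ≠ 0) :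
    (q * q' : ℝ) ≤ coeffDenom f * (sphereSup f *
      ‖WithLp.toLp 2 (fun i => (q' * a i - q * a' i : ℝ))‖ ^ s) := by
  obtain ⟨g, hg⟩ := exists_int_map_eq_coeffDenom_smul f
  have hgf (z : Fin d → ℤ) : ((eval z g : ℤ) : ℚ) = coeffDenom f * eval (fun i => (z i : ℚ)) f := by
    have := congrArg (eval fun i => (z i : ℚ)) hg
    rw [smul_eval] at this
    rw [← this, eval_map, ← eq_intCast (Int.castRingHom ℚ)]
    exact eval₂_comp (Int.castRingHom ℚ) z g
  have hscale (t : ℚ) (x : Fin d → ℚ) : eval (fun i => t * x i) f = t ^ s * eval x f := by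
    simpa only [aeval_eq_eval] using aeval_mul_left_of_isHomogeneous hf t x
  have hnum {p : ℤ} {b : Fin d → ℤ} (hp : 1 ≤ p)
      (hb : eval (fun i => (b i : ℚ) / (p : ℚ)) f = 1) (t : ℤ) :
      eval (fun i => t * b i) g = t ^ s * (coeffDenom f * p ^ s) := by
    have hp0 : (p : ℚ) ≠ 0 := by exact_mod_cast (by omega : p ≠ 0)
    have e : (fun i => ((t * b i : ℤ) : ℚ)) = fun i => (t * p : ℚ) * (b i / p) := by
      ext i
      push_cast
      field_simp
    have := hgf fun i => t * b i
    rw [e, hscale, hb] at this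
    have h2 : ((eval (fun i => t * b i) g : ℤ) : ℚ)
        = ((t ^ s * (coeffDenom f * p ^ s) : ℤ) : ℚ) := by
      rw [this]
      push_cast
      ring
    exact_mod_cast h2
  have hdvd : q * q' ∣ eval (fun i => q' * a i - q * a' i) g := by
    have hmix := mul_dvd_eval_mixed_difference g q' (-q) a a'
    have h0 : eval (fun _ => 0) g = 0 := by simpa [hs] using hnum hq h 0
    rw [hnum hq h, hnum hq' h', h0] at hmix
    have e : (fun i => q' * a i + -q * a' i) = fun i => q' * a i - q * a' i := by
      ext i
      ring
    rw [e] at hmix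
    obtain ⟨n, rfl⟩ := Nat.exists_eq_succ_of_ne_zero hs
    obtain ⟨k, hk⟩ := hmix
    refine ⟨-k + q ^ n * q' ^ n * coeffDenom f * (1 + (-1) ^ (n + 1)), ?_⟩
    rw [neg_pow q] at hk
    simp only [Nat.succ_eq_add_one] at hk ⊢
    linear_combination hk
  have hne0 : eval (fun i => q' * a i - q * a' i) g ≠ 0 := by
    intro h0
    have := hgf fun i => q' * a i - q * a' i
    rw [h0, Int.cast_zero, eq_comm, mul_eq_zero] at this
    rcases this with h1 | h1
    · exact (coeffDenom_pos f).ne' (by exact_mod_cast h1)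
    · refine eval_ne_zero_of_finite_zeros hf hfin (fun hz => ?_) h1
      obtain ⟨i, hi⟩ := hne
      have hi0 : ((q' * a i - q * a' i : ℤ) : ℚ) = 0 := congrFun hz i
      exact hi (by exact_mod_cast hi0)
  have hle : q * q' ≤ |eval (fun i => q' * a i - q * a' i) g| :=
    Int.le_of_dvd (abs_pos.mpr hne0) ((dvd_abs _ _).mpr hdvd)
  have hreal : ((eval (fun i => q' * a i - q * a' i) g : ℤ) : ℝ)
      = coeffDenom f * aeval (fun i => (q' * a i - q * a' i : ℝ)) f := by
    have h1 := congrArg (fun r : ℚ => (r : ℝ)) (hgf fun i => q' * a i - q * a' i)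
    have h2 := aeval_algebraMap_apply ℝ (fun i => ((q' * a i - q * a' i : ℤ) : ℚ)) f
    rw [aeval_eq_eval, eq_ratCast] at h2
    simp only [Rat.cast_intCast, Rat.cast_mul, Rat.cast_natCast] at h1
    rw [h1]
    simp only [← h2, Function.comp_def, eq_ratCast, Rat.cast_intCast]
    push_cast
    rfl
  have hb := abs_aeval_le_sphereSup_mul hs hf
    (WithLp.toLp 2 (fun i => (q' * a i - q * a' i : ℝ)))
  calc (q * q' : ℝ) ≤ |((eval (fun i => q' * a i - q * a' i) g : ℤ) : ℝ)| := by
        exact_mod_cast hle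
    _ = coeffDenom f * |aeval (fun i => (q' * a i - q * a' i : ℝ)) f| := by
        rw [hreal, abs_mul, Nat.abs_cast]
    _ ≤ _ := by gcongr

/-- `|qξ - a|`, the Euclidean distance that enters `PsiSurface`. -/
noncomputable def approxError {d : ℕ} (ξ : EuclideanSpace ℝ (Fin d)) (q : ℤ) (a : Fin d → ℤ) : ℝ :=
  ‖(q : ℝ) • ξ - WithLp.toLp 2 (fun i => (a i : ℝ))‖

theorem approxError_pos {d : ℕ} {ξ : EuclideanSpace ℝ (Fin d)}
    (hirr : ¬ ∃ x : Fin d → ℚ, ∀ i, (x i : ℝ) = ξ i) {q : ℤ} (hq : 1 ≤ q) (a : Fin d → ℤ) :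
    0 < approxError ξ q a := by
  refine norm_pos_iff.mpr fun h => hirr ⟨fun i => a i / q, fun i => ?_⟩
  have hq0 : (q : ℝ) ≠ 0 := by exact_mod_cast (by omega : q ≠ 0)
  have hi := congrArg (fun v : EuclideanSpace ℝ (Fin d) => v i) h
  simp [sub_eq_zero] at hi
  push_cast
  rw [← hi]
  field_simp

theorem finite_approxError_le {d : ℕ} (ξ : EuclideanSpace ℝ (Fin d)) (T B : ℝ) :
    {p : ℤ × (Fin d → ℤ) | 1 ≤ p.1 ∧ (p.1 : ℝ) ≤ T ∧ approxError ξ p.1 p.2 ≤ B}.Finite := by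
  set N : ℤ := ⌈T * ‖ξ‖ + B⌉
  refine ((Set.finite_Icc (1 : ℤ) ⌈T⌉).prod
    (Set.finite_Icc (fun _ : Fin d => -N) fun _ => N)).subset ?_
  rintro ⟨q, a⟩ ⟨h1, hT, hB⟩
  have hq0 : (0 : ℝ) ≤ q := by exact_mod_cast (by omega : 0 ≤ q)
  have habs (i : Fin d) : |a i| ≤ N := by
    have h2 : ‖WithLp.toLp 2 (fun i => (a i : ℝ))‖ ≤ T * ‖ξ‖ + B := by
      calc ‖WithLp.toLp 2 (fun i => (a i : ℝ))‖
          ≤ ‖(q : ℝ) • ξ‖ + ‖(q : ℝ) • ξ - WithLp.toLp 2 (fun i => (a i : ℝ))‖ := by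
            simpa [norm_sub_rev] using norm_sub_le ((q : ℝ) • ξ)
              ((q : ℝ) • ξ - WithLp.toLp 2 (fun i => (a i : ℝ)))
        _ ≤ T * ‖ξ‖ + B := by
            rw [norm_smul, Real.norm_of_nonneg hq0]
            exact add_le_add (by gcongr) hB
    have h3 := (PiLp.norm_apply_le (WithLp.toLp 2 (fun i => (a i : ℝ))) i).trans
      (h2.trans (Int.le_ceil _))
    simp only [Real.norm_eq_abs] at h3
    exact_mod_cast h3
  refine ⟨⟨h1, ?_⟩, fun i => (abs_le.mp (habs i)).1, fun i => (abs_le.mp (habs i)).2⟩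
  exact_mod_cast hT.trans (Int.le_ceil T)

/-- A lower bound for every admissible vector is a lower bound for `T ^ (s - 1) * Ψ(T)`. -/
theorem le_mul_PsiSurface {d s : ℕ} {f : MvPolynomial (Fin d) ℚ} {ξ : EuclideanSpace ℝ (Fin d)}
    {T c : ℝ} (hT : 0 < T)
    (h : ∀ (q : ℤ) (a : Fin d → ℤ), 1 ≤ q → (q : ℝ) ≤ T →
      eval (fun i => (a i : ℚ) / (q : ℚ)) f = 1 →
      c ≤ T ^ (s - 1) * (approxError ξ q a ^ s / q)) :
    (c : EReal) ≤ ((T ^ (s - 1) : ℝ) : EReal) * PsiSurface f s ξ T := by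
  have hpow : (0 : EReal) < ((T ^ (s - 1) : ℝ) : EReal) := by exact_mod_cast pow_pos hT _
  rw [← EReal.div_le_iff_le_mul hpow (EReal.coe_ne_top _)]
  refine le_sInf ?_
  rintro _ ⟨q, a, hq, hqT, hf, rfl⟩
  rw [EReal.div_le_iff_le_mul hpow (EReal.coe_ne_top _)]
  have := h q a hq hqT hf
  rw [approxError] at this
  exact_mod_cast this

/-- If the surface has an approximation of quality `c` at every large height, then there are two
consecutive best approximations, the first one of which has quality `c` up to the height of the
second. -/
theorem exists_consecutive_approximations {d s : ℕ} (hs : 2 ≤ s) {f : MvPolynomial (Fin d) ℚ}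
    {ξ : EuclideanSpace ℝ (Fin d)} (hirr : ¬ ∃ x : Fin d → ℚ, ∀ i, (x i : ℝ) = ξ i)
    {T₁ c : ℝ} (hT₁ : 1 ≤ T₁)
    (h : ∀ T : ℝ, T₁ ≤ T → ∃ (q : ℤ) (a : Fin d → ℤ), 1 ≤ q ∧ (q : ℝ) ≤ T ∧
      eval (fun i => (a i : ℚ) / (q : ℚ)) f = 1 ∧
      T ^ (s - 1) * (approxError ξ q a ^ s / q) < c) :
    ∃ (q q' : ℤ) (a a' : Fin d → ℤ), 1 ≤ q ∧ q < q' ∧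
      eval (fun i => (a i : ℚ) / (q : ℚ)) f = 1 ∧
      eval (fun i => (a' i : ℚ) / (q' : ℚ)) f = 1 ∧
      approxError ξ q' a' ^ s / q' < approxError ξ q a ^ s / q ∧
      (q' : ℝ) ^ (s - 1) * (approxError ξ q a ^ s / q) ≤ c := by
  have hs0 : s ≠ 0 := by omega
  have hwpos {q : ℤ} (hq : 1 ≤ q) (a : Fin d → ℤ) : 0 < approxError ξ q a ^ s / q :=
    div_pos (pow_pos (approxError_pos hirr hq a) s) (by exact_mod_cast hq)
  obtain ⟨q₀, a₀, hq₀, hq₀T, hf₀, -⟩ := h T₁ le_rfl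
  set W := approxError ξ q₀ a₀ ^ s / q₀ with hW
  have hfin : {p : ℤ × (Fin d → ℤ) | (1 ≤ p.1 ∧ (p.1 : ℝ) ≤ T₁ ∧
      eval (fun i => (p.2 i : ℚ) / (p.1 : ℚ)) f = 1) ∧
      approxError ξ p.1 p.2 ^ s / p.1 ≤ W}.Finite := by
    refine (finite_approxError_le ξ T₁ (max 1 (W * T₁))).subset ?_
    rintro ⟨q, a⟩ ⟨⟨hq, hqT, -⟩, hw⟩
    refine ⟨hq, hqT, ?_⟩
    dsimp only at *
    have hqpos : (0 : ℝ) < q := by exact_mod_cast hq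
    rw [div_le_iff₀ hqpos] at hw
    rcases le_total (approxError ξ q a) 1 with h1 | h1
    · exact h1.trans (le_max_left _ _)
    · refine (le_self_pow₀ h1 hs0).trans (hw.trans ((?_ : _ ≤ W * T₁).trans (le_max_right _ _)))
      have := (hwpos hq₀ a₀).le
      gcongr
  obtain ⟨⟨q, a⟩, ⟨⟨hq, hqT, hf⟩, hle⟩, hmin⟩ := Set.exists_min_image _
    (fun p : ℤ × (Fin d → ℤ) => approxError ξ p.1 p.2 ^ s / p.1) hfin
    ⟨(q₀, a₀), ⟨hq₀, hq₀T, hf₀⟩, le_rfl⟩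
  dsimp only at hq hqT hf hle hmin
  set m := approxError ξ q a ^ s / q with hm
  have hmpos : 0 < m := hwpos hq a
  have hbest {p : ℤ} {b : Fin d → ℤ} (hp : 1 ≤ p) (hpT : (p : ℝ) ≤ T₁)
      (hb : eval (fun i => (b i : ℚ) / (p : ℚ)) f = 1) : m ≤ approxError ξ p b ^ s / p := by
    by_contra! hlt
    exact hlt.not_ge (hmin (p, b) ⟨⟨hp, hpT, hb⟩, hlt.le.trans hle⟩)
  let P : ℕ → Prop := fun n => 1 ≤ n ∧ ∃ b : Fin d → ℤ,
    eval (fun i => (b i : ℚ) / ((n : ℤ) : ℚ)) f = 1 ∧ approxError ξ n b ^ s / (n : ℤ) < m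
  have hP : ∃ n, P n := by
    have hT := le_max_left T₁ (c / m)
    obtain ⟨p, b, hp, hpT, hb, hlt⟩ := h (max T₁ (c / m)) hT
    lift p to ℕ using by omega
    refine ⟨p, by exact_mod_cast hp, b, hb, ?_⟩
    by_contra! hge
    refine hlt.not_ge ?_
    calc c = c / m * m := by field_simp
      _ ≤ max T₁ (c / m) ^ (s - 1) * m := by
        gcongr
        exact (le_max_right _ _).trans (le_self_pow₀ (hT₁.trans hT) (by omega))
      _ ≤ _ := by gcongr
  classical
  obtain ⟨hn1, a', hf', hlt'⟩ := Nat.find_spec hP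
  set n := Nat.find hP with hn
  have hnT : T₁ < n := by
    by_contra! hle'
    exact hlt'.not_ge (hbest (p := (n : ℤ)) (by exact_mod_cast hn1) (by exact_mod_cast hle') hf')
  refine ⟨q, n, a, a', hq, ?_, hf, hf', hlt', ?_⟩
  · exact_mod_cast hqT.trans_lt hnT
  · have hcont : Filter.Tendsto (fun T : ℝ => T ^ (s - 1) * m) (nhdsWithin (n : ℝ) (Set.Iio n))
        (nhds ((n : ℝ) ^ (s - 1) * m)) :=
      (Continuous.tendsto (by fun_prop) _).mono_left nhdsWithin_le_nhds
    refine le_of_tendsto (by simpa using hcont) ?_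
    filter_upwards [Ioo_mem_nhdsLT hnT] with T hT
    obtain ⟨p, b, hp, hpT, hb, hlt⟩ := h T hT.1.le
    lift p to ℕ using by omega
    have hpn : p < n := by exact_mod_cast hpT.trans_lt hT.2
    have hmp : m ≤ approxError ξ p b ^ s / (p : ℤ) := by
      by_contra! hlt''
      exact Nat.find_min hP hpn ⟨by exact_mod_cast hp, b, hb, hlt''⟩
    have hT0 : 0 ≤ T := by linarith [hT.1]
    exact (mul_le_mul_of_nonneg_left hmp (pow_nonneg hT0 _)).trans hlt.le

/-- Two approximations of which the second improves on the first cannot both be too good. -/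
theorem one_le_of_consecutive_approximations {d s : ℕ} (hs : 2 ≤ s) {f : MvPolynomial (Fin d) ℚ}
    (hf : f.IsHomogeneous s) (hfin : {x : Fin d → ℚ | eval x f = 0}.Finite)
    (hK : 0 ≤ sphereSup f)
    {ξ : EuclideanSpace ℝ (Fin d)} {q q' : ℤ} {a a' : Fin d → ℤ} {c : ℝ} (hq : 1 ≤ q) (hqq' : q < q')
    (h : eval (fun i => (a i : ℚ) / (q : ℚ)) f = 1)
    (h' : eval (fun i => (a' i : ℚ) / (q' : ℚ)) f = 1)
    (hlt : approxError ξ q' a' ^ s / q' < approxError ξ q a ^ s / q)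
    (hc : (q' : ℝ) ^ (s - 1) * (approxError ξ q a ^ s / q) ≤ c) :
    1 ≤ 2 ^ s * coeffDenom f * sphereSup f * c := by
  obtain ⟨n, rfl⟩ : ∃ n, s = n + 1 := ⟨s - 1, by omega⟩
  have hn0 : n + 1 ≠ 0 := by omega
  have hq0 : (0 : ℝ) < q := by exact_mod_cast hq
  have hqq : (q : ℝ) < q' := by exact_mod_cast hqq'
  have hq0' : (0 : ℝ) < q' := hq0.trans hqq
  rw [Nat.add_sub_cancel] at hc
  have hL : 0 ≤ approxError ξ q a := norm_nonneg _
  have hL' : 0 ≤ approxError ξ q' a' := norm_nonneg _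
  have hz : WithLp.toLp 2 (fun i => (q' * a i - q * a' i : ℝ))
      = (q : ℝ) • ((q' : ℝ) • ξ - WithLp.toLp 2 (fun i => (a' i : ℝ)))
        - (q' : ℝ) • ((q : ℝ) • ξ - WithLp.toLp 2 (fun i => (a i : ℝ))) := by
    ext i
    simp
    ring
  have hnorm : ‖WithLp.toLp 2 (fun i => (q' * a i - q * a' i : ℝ))‖
      ≤ q * approxError ξ q' a' + q' * approxError ξ q a := by
    rw [hz]
    refine (norm_sub_le _ _).trans_eq ?_
    rw [norm_smul, norm_smul, Real.norm_of_nonneg hq0.le, Real.norm_of_nonneg hq0'.le]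
    rfl
  have hpow : q ^ (n + 1) * approxError ξ q' a' ^ (n + 1)
      ≤ q' ^ (n + 1) * approxError ξ q a ^ (n + 1) := by
    rw [div_lt_div_iff₀ hq0' hq0] at hlt
    calc (q : ℝ) ^ (n + 1) * approxError ξ q' a' ^ (n + 1)
        = q ^ n * (approxError ξ q' a' ^ (n + 1) * q) := by ring
      _ ≤ q' ^ n * (approxError ξ q a ^ (n + 1) * q') := by gcongr
      _ = _ := by ring
  have hBA : q * approxError ξ q' a' ≤ q' * approxError ξ q a := by
    rw [← mul_pow, ← mul_pow] at hpow
    exact le_of_pow_le_pow_left₀ hn0 (by positivity) hpow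
  have hne : ∃ i, q' * a i - q * a' i ≠ 0 := by
    by_contra! hall
    have hv : WithLp.toLp 2 (fun i => (q' * a i - q * a' i : ℝ)) = 0 := by
      ext i
      simpa using (by exact_mod_cast hall i : (q' * a i - q * a' i : ℝ) = 0)
    rw [hv, eq_comm, sub_eq_zero] at hz
    have heq : q * approxError ξ q' a' = q' * approxError ξ q a := by
      have := congrArg norm hz
      rwa [norm_smul, norm_smul, Real.norm_of_nonneg hq0.le, Real.norm_of_nonneg hq0'.le] at this
    have hle : approxError ξ q a ≤ approxError ξ q' a' := by
      refine le_of_mul_le_mul_left ?_ hq0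
      rw [heq]
      gcongr
    refine hlt.not_ge ?_
    rw [div_le_div_iff₀ hq0 hq0']
    calc approxError ξ q a ^ (n + 1) * q' = approxError ξ q a ^ n * (q' * approxError ξ q a) := by
          ring
      _ = approxError ξ q a ^ n * (q * approxError ξ q' a') := by rw [heq]
      _ ≤ approxError ξ q' a' ^ n * (q * approxError ξ q' a') := by gcongr
      _ = _ := by ring
  have hsep := mul_le_coeffDenom_mul_sphereSup_mul hn0 hf hfin hq (hq.trans hqq'.le) h h' hne
  have hA : (q' * approxError ξ q a) ^ (n + 1) ≤ q * q' * c := by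
    calc (q' * approxError ξ q a) ^ (n + 1)
        = q * q' * (q' ^ n * (approxError ξ q a ^ (n + 1) / q)) := by
          field_simp
          ring
      _ ≤ _ := by gcongr
  have hall : (q * q' : ℝ) * 1 ≤ q * q' * (2 ^ (n + 1) * coeffDenom f * sphereSup f * c) := by
    calc (q * q' : ℝ) * 1 ≤ coeffDenom f * (sphereSup f *
          ‖WithLp.toLp 2 (fun i => (q' * a i - q * a' i : ℝ))‖ ^ (n + 1)) := by rwa [mul_one]
      _ ≤ coeffDenom f * (sphereSup f * (2 * (q' * approxError ξ q a)) ^ (n + 1)) := by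
          gcongr
          linarith
      _ = coeffDenom f * (sphereSup f * (2 ^ (n + 1) * (q' * approxError ξ q a) ^ (n + 1))) := by
          rw [mul_pow 2]
      _ ≤ coeffDenom f * (sphereSup f * (2 ^ (n + 1) * (q * q' * c))) := by gcongr
      _ = _ := by ring
  exact le_of_mul_le_mul_left hall (by positivity)

theorem intrinsic_uniform_lower_bound_hypersurface
    (d s : ℕ) (hs : 2 ≤ s)
    (f : MvPolynomial (Fin d) ℚ) (hhom : f.IsHomogeneous s)
    (hfin : {x : Fin d → ℚ | MvPolynomial.eval x f = 0}.Finite)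
    (ξ : EuclideanSpace ℝ (Fin d))
    (hirr : ¬ ∃ x : Fin d → ℚ, ∀ i, (x i : ℝ) = ξ i)
    (hsurf : MvPolynomial.aeval (fun i => ξ i) f = (1 : ℝ))
    (ε : ℝ) (hε : 0 < ε) (T₀ : ℝ) :
    ∃ T : ℝ, T₀ ≤ T ∧
      ((1 / (2 ^ s * (coeffDenom f : ℝ) * sphereSup f) - ε : ℝ) : EReal) ≤
        ((T ^ (s - 1) : ℝ) : EReal) * PsiSurface f s ξ T := by
  have hK : 0 < sphereSup f := by
    have h1 := abs_aeval_le_sphereSup_mul (by omega : s ≠ 0) hhom ξ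
    rw [hsurf, abs_one] at h1
    exact pos_of_mul_pos_left (one_pos.trans_le h1) (by positivity)
  have hD : (0 : ℝ) < coeffDenom f := by exact_mod_cast coeffDenom_pos f
  by_contra! hcon
  obtain ⟨q, q', a, a', hq, hqq', h, h', hlt, hc⟩ :=
    exists_consecutive_approximations hs hirr (f := f) (T₁ := max 1 T₀)
      (c := 1 / (2 ^ s * (coeffDenom f : ℝ) * sphereSup f) - ε) (le_max_left _ _) fun T hT => by
        by_contra! hge
        exact (hcon T ((le_max_right _ _).trans hT)).not_ge
          (le_mul_PsiSurface (one_pos.trans_le ((le_max_left _ _).trans hT)) hge)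
  have hone := one_le_of_consecutive_approximations hs hhom hfin hK.le hq hqq' h h' hlt hc
  rw [mul_sub, mul_one_div_cancel (by positivity)] at hone
  have : 0 < 2 ^ s * (coeffDenom f : ℝ) * sphereSup f * ε := by positivity
  linarith
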